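/- Let n be a positive integer, let p be a linear order on Fin n, let 1 ≤ i < n, and let p' be the linear order obtained from p by swapping the elements occupying the i-th and (i+1)-st positions of p. If π is a partition of Fin n that is non-crossing with respect to p, then the row F_n[π] of the forest compatibility matrix is a ℚ-linear combination of rows F_n[ρ] indexed by partitions ρ of Fin n that are non-crossing with respect to p'. -/

import Mathlib

noncomputable section

/-- The number of blocks of a partition of `β`, represented as a setoid. -/
def nBlocks {β : Type*} (s : Setoid β) : ℕ := Nat.card (Quotient s)

/-- Two partitions of a finite set are compatible if `|π| + |ρ| = n + |π ⊔ ρ|`. -/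
def Compatible {β : Type*} (s t : Setoid β) : Prop :=
  nBlocks s + nBlocks t = Nat.card β + nBlocks (s ⊔ t)

open scoped Classical in
/-- The forest compatibility matrix `F_β`. -/
def FMat (β : Type*) : Matrix (Setoid β) (Setoid β) ℚ := fun s t =>
  if Compatible s t then 1 else 0

/-- Two blocks `A` and `B` cross (with respect to a strict order `lt` on the
ground set) if there are `a1, a2 ∈ A` and `b1, b2 ∈ B` with
`a1 < b1 < a2 < b2` or `b1 < a1 < b2 < a2`. -/
def Crosses {α : Type*} (lt : α → α → Prop) (A B : Set α) : Prop :=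
  ∃ a1 ∈ A, ∃ a2 ∈ A, ∃ b1 ∈ B, ∃ b2 ∈ B,
    (lt a1 b1 ∧ lt b1 a2 ∧ lt a2 b2) ∨ (lt b1 a1 ∧ lt a1 b2 ∧ lt b2 a2)

/-- A partition (given as a setoid) is non-crossing for the order `lt` if no two
of its blocks (equivalence classes) cross. -/
def NonCrossingSetoid {α : Type*} (lt : α → α → Prop) (s : Setoid α) : Prop :=
  ∀ A ∈ s.classes, ∀ B ∈ s.classes, A ≠ B → ¬ Crosses lt A B

/-- A linear order on `Fin n` described by the bijection `p` sending each element
to its position: `x` comes before `y` iff the position of `x` is smaller. -/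
def ltOfOrder {n : ℕ} (p : Fin n ≃ Fin n) : Fin n → Fin n → Prop :=
  fun x y => p x < p y

/-!
On four elements the rows of `F` satisfy one linear relation: the rows of the three partitions into
two pairs and of the one-block partition add up to the same vector as the rows of the four
partitions with a block of size three. It persists when the four elements are replaced by elements
of four distinct blocks of a partition of a larger set.

Let `x` and `y` be consecutive and let `s` be non-crossing. If `x` and `y` lie in one block, or one
of them is a singleton, then `s` stays non-crossing after the swap. Otherwise choose `a` in the rest
of the block of `x` and `b` in the rest of the block of `y`, and apply the relation to
`x, y, a, b` over the partition obtained by isolating `x` and `y` in `s`. The pairing `xa | yb` is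
`s` itself, the pairing `xb | ya` is `s` with `x` and `y` exchanged, and in each of the remaining
six partitions `x` and `y` lie in one block or one of them is a singleton. Those six arise from `s`
by merging the blocks of the neighbours `x` and `y` and by isolating elements, and both operations
preserve being non-crossing.
-/

open Function Equiv

variable {α β : Type*}

section MergeAndIsolate

variable {s t : Setoid α} {x y a b u v : α}

/-- The partition obtained from `s` by joining the block of `x` with the block of `y`, i.e. by
adding the edge `xy` to a forest representing `s`. -/
def mergeBlocks (s : Setoid α) (x y : α) : Setoid α where
  r u v := s u v ∨ (s u x ∧ s y v) ∨ (s u y ∧ s x v)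
  iseqv := by
    have refl := s.refl'
    have symm := @s.symm'
    have trans := @s.trans'
    constructor <;> grind

/-- The partition obtained from `s` by moving `x` out of its block into a block of its own. -/
def isolate (s : Setoid α) (x : α) : Setoid α where
  r u v := u = v ∨ (s u v ∧ u ≠ x ∧ v ≠ x)
  iseqv := by
    have symm := @s.symm'
    have trans := @s.trans'
    constructor <;> grind

theorem mergeBlocks_iff :
    mergeBlocks s x y u v ↔ s u v ∨ (s u x ∧ s y v) ∨ (s u y ∧ s x v) :=
  Iff.rfl

theorem isolate_iff : isolate s x u v ↔ u = v ∨ (s u v ∧ u ≠ x ∧ v ≠ x) :=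
  Iff.rfl

theorem mergeBlocks_le_iff : mergeBlocks s x y ≤ t ↔ s ≤ t ∧ t x y := by
  constructor
  · intro h
    exact ⟨fun u v huv => h (.inl huv), h (.inr (.inl ⟨s.refl' x, s.refl' y⟩))⟩
  · rintro ⟨hst, hxy⟩ u v (huv | ⟨hux, hyv⟩ | ⟨huy, hxv⟩)
    · exact hst huv
    · exact t.trans' (hst hux) (t.trans' hxy (hst hyv))
    · exact t.trans' (hst huy) (t.trans' (t.symm' hxy) (hst hxv))

theorem le_mergeBlocks (s : Setoid α) (x y : α) : s ≤ mergeBlocks s x y :=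
  (mergeBlocks_le_iff.1 le_rfl).1

theorem mergeBlocks_rel (s : Setoid α) (x y : α) : mergeBlocks s x y x y :=
  (mergeBlocks_le_iff.1 le_rfl).2

theorem mergeBlocks_eq_self (h : s x y) : mergeBlocks s x y = s :=
  le_antisymm (mergeBlocks_le_iff.2 ⟨le_rfl, h⟩) (le_mergeBlocks s x y)

theorem mergeBlocks_sup (s t : Setoid α) (x y : α) :
    mergeBlocks s x y ⊔ t = mergeBlocks (s ⊔ t) x y :=
  eq_of_forall_ge_iff fun r => by
    simp only [sup_le_iff, mergeBlocks_le_iff, and_right_comm]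

theorem mergeBlocks_sup_iff :
    (mergeBlocks s x y ⊔ t) u v ↔ mergeBlocks (s ⊔ t) x y u v := by
  rw [mergeBlocks_sup]

theorem mergeBlocks_comm (s : Setoid α) (x y : α) : mergeBlocks s x y = mergeBlocks s y x :=
  eq_of_forall_ge_iff fun r => by simp only [mergeBlocks_le_iff, r.comm' (x := x)]

theorem mergeBlocks_congr (hxa : s x a) (hyb : s y b) :
    mergeBlocks s x y = mergeBlocks s a b :=
  eq_of_forall_ge_iff fun r => by
    simp only [mergeBlocks_le_iff]
    refine and_congr_right fun hsr => ⟨fun hxy => ?_, fun hab => ?_⟩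
    · exact r.trans' (r.symm' (hsr hxa)) (r.trans' hxy (hsr hyb))
    · exact r.trans' (hsr hxa) (r.trans' hab (r.symm' (hsr hyb)))

theorem isolate_comm (s : Setoid α) (x y : α) :
    isolate (isolate s x) y = isolate (isolate s y) x := by
  ext u v
  simp only [isolate_iff]
  tauto

theorem isolate_eq_self (hx : ∀ a, s x a → a = x) : isolate s x = s := by
  ext u v
  have refl := s.refl'
  have symm := @s.symm'
  simp only [isolate_iff]
  grind

theorem mergeBlocks_isolate_self (hxa : s x a) (hax : a ≠ x) :
    mergeBlocks (isolate s x) x a = s := by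
  ext u v
  have refl := s.refl'
  have symm := @s.symm'
  have trans := @s.trans'
  simp only [mergeBlocks_iff, isolate_iff]
  grind

theorem mergeBlocks_isolate_of_ne (hax : a ≠ x) (hbx : b ≠ x) :
    mergeBlocks (isolate s x) a b = isolate (mergeBlocks s a b) x := by
  ext u v
  have refl := s.refl'
  simp only [mergeBlocks_iff, isolate_iff]
  grind

theorem comap_swap_eq_self [DecidableEq α] (hxy : s x y) : s.comap (swap x y) = s := by
  have rel_swap (z : α) : s (swap x y z) z := by
    rw [swap_apply_def]
    split_ifs with hzx hzy
    · exact hzx ▸ s.symm' hxy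
    · exact hzy ▸ hxy
    · exact s.refl' z
  ext u v
  rw [Setoid.comap_rel]
  exact ⟨fun h => s.trans' (s.symm' (rel_swap u)) (s.trans' h (rel_swap v)),
    fun h => s.trans' (rel_swap u) (s.trans' h (s.symm' (rel_swap v)))⟩

theorem mergeBlocks_isolate_isolate_eq_comap_swap [DecidableEq α] (hxa : s x a) (hax : a ≠ x)
    (hyb : s y b) (hby : b ≠ y) (hxy : ¬ s x y) :
    mergeBlocks (mergeBlocks (isolate (isolate s x) y) x b) y a = s.comap (swap x y) := by
  ext u v
  have refl := s.refl'
  have symm := @s.symm'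
  have trans := @s.trans'
  simp only [Setoid.comap_rel, swap_apply_def, mergeBlocks_iff, isolate_iff]
  grind

theorem mergeBlocks_induction [Finite α] {motive : Setoid α → Prop} (bot : motive ⊥)
    (merge : ∀ r x y, ¬ r x y → motive r → motive (mergeBlocks r x y)) (s : Setoid α) :
    motive s := by
  have : Finite (Setoid α) :=
    Finite.of_injective (fun r : Setoid α => ⇑r) fun _ _ => Setoid.eq_iff_rel_eq.2
  obtain ⟨r, ⟨hrs, hr⟩, hmax⟩ :=
    (Set.toFinite {r | r ≤ s ∧ motive r}).exists_maximal ⟨⊥, bot_le, bot⟩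
  suffices s ≤ r from le_antisymm hrs this ▸ hr
  intro x y hxy
  by_contra hrxy
  have hle := hmax ⟨mergeBlocks_le_iff.2 ⟨hrs, hxy⟩, merge r x y hrxy hr⟩ (le_mergeBlocks r x y)
  exact hrxy (hle (mergeBlocks_rel r x y))

end MergeAndIsolate

section CompatibilityMatrix

variable [Finite α] {s τ : Setoid α} {x y a b : α}

theorem nBlocks_mergeBlocks (h : ¬ s x y) : nBlocks (mergeBlocks s x y) + 1 = nBlocks s := by
  classical
  let project : {q : Quotient s // q ≠ ⟦x⟧} → Quotient (mergeBlocks s x y) :=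
    fun q => Setoid.map_of_le (le_mergeBlocks s x y) q.1
  have injective : Injective project := by
    rintro ⟨⟨u⟩, hu⟩ ⟨⟨v⟩, hv⟩ huv
    rcases Quotient.exact huv with huv | ⟨hux, -⟩ | ⟨-, hxv⟩
    · exact Subtype.ext (Quotient.sound huv)
    · exact absurd (Quotient.sound hux) hu
    · exact absurd (Quotient.sound (s.symm' hxv)) hv
  have surjective : Surjective project := by
    rintro ⟨u⟩
    by_cases hux : s u x
    · refine ⟨⟨⟦y⟧, fun hyx => h (s.symm' (Quotient.exact hyx))⟩, ?_⟩
      exact Quotient.sound (.inr (.inr ⟨s.refl' y, s.symm' hux⟩))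
    · exact ⟨⟨⟦u⟧, fun hu => hux (Quotient.exact hu)⟩, rfl⟩
  rw [nBlocks, nBlocks, ← Nat.card_eq_of_bijective project ⟨injective, surjective⟩,
    ← Finite.card_option, Nat.card_congr (optionSubtypeNe (⟦x⟧ : Quotient s))]

theorem nBlocks_add_nBlocks_le (s t : Setoid α) :
    nBlocks s + nBlocks t ≤ Nat.card α + nBlocks (s ⊔ t) := by
  induction s using mergeBlocks_induction with
  | bot =>
    rw [bot_sup_eq]
    exact Nat.add_le_add_right (Nat.card_le_card_of_surjective _ Quotient.mk_surjective) _
  | merge r x y hxy ih =>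
    have hr := nBlocks_mergeBlocks hxy
    rw [mergeBlocks_sup]
    by_cases hsup : (r ⊔ t) x y
    · rw [mergeBlocks_eq_self hsup]
      lia
    · have := nBlocks_mergeBlocks hsup
      lia

theorem compatible_mergeBlocks_iff (t : Setoid α) (h : ¬ s x y) :
    Compatible (mergeBlocks s x y) t ↔ ¬ (s ⊔ t) x y ∧ Compatible s t := by
  have hs := nBlocks_mergeBlocks h
  have hle := nBlocks_add_nBlocks_le s t
  rw [Compatible, Compatible, mergeBlocks_sup]
  by_cases hsup : (s ⊔ t) x y
  · rw [mergeBlocks_eq_self hsup]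
    lia
  · have := nBlocks_mergeBlocks hsup
    lia

open scoped Classical in
theorem FMat_mergeBlocks_apply (t : Setoid α) (h : ¬ s x y) :
    FMat α (mergeBlocks s x y) t = if (s ⊔ t) x y then 0 else FMat α s t := by
  simp only [FMat, compatible_mergeBlocks_iff t h, ite_and, ite_not]

theorem FMat_four_point_relation (hτ : [x, y, a, b].Pairwise fun u v => ¬ τ u v) :
    FMat α (mergeBlocks (mergeBlocks τ x a) y b) + FMat α (mergeBlocks (mergeBlocks τ x b) y a)
        + FMat α (mergeBlocks (mergeBlocks τ a b) x y)
        + FMat α (mergeBlocks (mergeBlocks (mergeBlocks τ x a) y b) x y) =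
      FMat α (mergeBlocks (mergeBlocks τ x a) a b) + FMat α (mergeBlocks (mergeBlocks τ y b) a b)
        + FMat α (mergeBlocks (mergeBlocks τ x a) x y)
        + FMat α (mergeBlocks (mergeBlocks τ y b) x y) := by
  classical
  simp only [List.pairwise_cons, List.mem_cons, List.not_mem_nil, or_false, forall_eq_or_imp,
    forall_eq, List.Pairwise.nil, and_true, IsEmpty.forall_iff, implies_true] at hτ
  have symm := @τ.symm'
  obtain ⟨⟨hxy, hxa, hxb⟩, ⟨hya, hyb⟩, hab⟩ := hτ
  funext t
  simp only [Pi.add_apply]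
  rw [FMat_mergeBlocks_apply (s := mergeBlocks (mergeBlocks τ x a) y b),
    FMat_mergeBlocks_apply (s := mergeBlocks τ x a) (x := y),
    FMat_mergeBlocks_apply (s := mergeBlocks τ x b) (x := y),
    FMat_mergeBlocks_apply (s := mergeBlocks τ a b) (x := x),
    FMat_mergeBlocks_apply (s := mergeBlocks τ x a) (x := a),
    FMat_mergeBlocks_apply (s := mergeBlocks τ y b) (x := a),
    FMat_mergeBlocks_apply (s := mergeBlocks τ x a) (x := x),
    FMat_mergeBlocks_apply (s := mergeBlocks τ y b) (x := x),
    FMat_mergeBlocks_apply t hxa, FMat_mergeBlocks_apply t hxb,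
    FMat_mergeBlocks_apply t hab, FMat_mergeBlocks_apply t hyb]
  · generalize FMat α τ t = c
    simp only [mergeBlocks_sup_iff, mergeBlocks_iff]
    generalize τ ⊔ t = R
    have refl := R.refl'
    have symm := @R.symm'
    have trans := @R.trans'
    -- Only the restriction of `R` to the four points matters, which leaves fifteen cases.
    grind
  all_goals simp only [mergeBlocks_iff]; grind

theorem FMat_uncrossing_relation [DecidableEq α] (hxa : s x a) (hax : a ≠ x) (hyb : s y b)
    (hby : b ≠ y) (hxy : ¬ s x y) :
    FMat α s + FMat α (s.comap (swap x y))
        + FMat α (mergeBlocks (isolate (isolate (mergeBlocks s x y) x) y) x y)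
        + FMat α (mergeBlocks s x y) =
      FMat α (isolate (mergeBlocks s x y) y) + FMat α (isolate (mergeBlocks s x y) x)
        + FMat α (mergeBlocks (isolate s y) x y) + FMat α (mergeBlocks (isolate s x) x y) := by
  have hay : a ≠ y := fun h => hxy (h ▸ hxa)
  have hbx : b ≠ x := fun h => hxy (s.symm' (h ▸ hyb))
  have hne : x ≠ y := fun h => hxy (h ▸ s.refl' x)
  have hab : ¬ s a b := fun h => hxy (s.trans' hxa (s.trans' h (s.symm' hyb)))
  have reattach_x : mergeBlocks (isolate (isolate s x) y) x a = isolate s y := by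
    rw [mergeBlocks_isolate_of_ne hne hay, mergeBlocks_isolate_self hxa hax]
  have reattach_y : mergeBlocks (isolate (isolate s x) y) y b = isolate s x := by
    rw [isolate_comm, mergeBlocks_isolate_of_ne hne.symm hbx, mergeBlocks_isolate_self hyb hby]
  have merge_ab : mergeBlocks (isolate (isolate s x) y) a b =
      isolate (isolate (mergeBlocks s x y) x) y := by
    rw [mergeBlocks_isolate_of_ne hay hby, mergeBlocks_isolate_of_ne hax hbx,
      mergeBlocks_congr hxa hyb]
  have unrelated : [x, y, a, b].Pairwise fun u v => ¬ isolate (isolate s x) y u v := by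
    have refl := s.refl'
    simp only [isolate_iff, List.pairwise_cons, List.mem_cons]
    grind
  have relation := FMat_four_point_relation unrelated
  rwa [mergeBlocks_isolate_isolate_eq_comap_swap hxa hax hyb hby hxy, reattach_x, reattach_y,
    merge_ab, mergeBlocks_isolate_self hyb hby, mergeBlocks_isolate_of_ne hay hby,
    mergeBlocks_isolate_of_ne hax hbx, ← mergeBlocks_congr hxa hyb] at relation

end CompatibilityMatrix

section NonCrossing

variable {s : Setoid α}

theorem nonCrossingSetoid_iff {lt : α → α → Prop} :
    NonCrossingSetoid lt s ↔
      ∀ a b c d, lt a b → lt b c → lt c d → s a c → s b d → s a b := by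
  constructor
  · intro h a b c d hab hbc hcd hac hbd
    by_contra hnot
    refine h _ (s.mem_classes a) _ (s.mem_classes b) (fun heq => hnot ?_)
      ⟨a, s.refl' a, c, s.symm' hac, b, s.refl' b, d, s.symm' hbd, .inl ⟨hab, hbc, hcd⟩⟩
    exact heq.subset (s.refl' a)
  · rintro h A hA B hB hne ⟨a₁, ha₁, a₂, ha₂, b₁, hb₁, b₂, hb₂, hcross⟩
    have ha : s a₁ a₂ := s.rel_iff_exists_classes.2 ⟨A, hA, ha₁, ha₂⟩
    have hb : s b₁ b₂ := s.rel_iff_exists_classes.2 ⟨B, hB, hb₁, hb₂⟩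
    have hab : s a₁ b₁ := by
      rcases hcross with ⟨h₁, h₂, h₃⟩ | ⟨h₁, h₂, h₃⟩
      · exact h _ _ _ _ h₁ h₂ h₃ ha hb
      · exact s.symm' (h _ _ _ _ h₁ h₂ h₃ hb ha)
    obtain ⟨C, hC, ha₁C, hb₁C⟩ := s.rel_iff_exists_classes.1 hab
    exact hne ((Setoid.eq_of_mem_classes hA ha₁ hC ha₁C).trans
      (Setoid.eq_of_mem_classes hC hb₁C hB hb₁))

namespace NonCrossingSetoid

variable {lt : α → α → Prop} {f : α → β} {x y a b c d : α}

protected theorem comap (hs : NonCrossingSetoid lt s) (σ : β → α) :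
    NonCrossingSetoid (fun u v => lt (σ u) (σ v)) (s.comap σ) :=
  nonCrossingSetoid_iff.2 fun _ _ _ _ => nonCrossingSetoid_iff.1 hs _ _ _ _

theorem swap_of_rel [DecidableEq α] (hs : NonCrossingSetoid lt s) (hxy : s x y) :
    NonCrossingSetoid (fun u v => lt (swap x y u) (swap x y v)) s :=
  comap_swap_eq_self hxy ▸ hs.comap (swap x y)

theorem isolate_of_lt_imp [Preorder β] (hs : NonCrossingSetoid lt s)
    (hlt : ∀ u v, u ≠ x → v ≠ x → f u < f v → lt u v) :
    NonCrossingSetoid (f · < f ·) (isolate s x) := by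
  refine nonCrossingSetoid_iff.2 fun a b c d hab hbc hcd hac hbd => ?_
  obtain rfl | ⟨hac, hax, hcx⟩ := hac
  · exact absurd hbc hab.asymm
  obtain rfl | ⟨hbd, hbx, hdx⟩ := hbd
  · exact absurd hcd hbc.asymm
  have hs_ab : s a b := nonCrossingSetoid_iff.1 hs a b c d (hlt a b hax hbx hab)
    (hlt b c hbx hcx hbc) (hlt c d hcx hdx hcd) hac hbd
  exact .inr ⟨hs_ab, hax, hbx⟩

protected theorem isolate [Preorder β] (hs : NonCrossingSetoid (f · < f ·) s) (x : α) :
    NonCrossingSetoid (f · < f ·) (isolate s x) :=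
  hs.isolate_of_lt_imp fun _ _ _ _ => id

variable [LinearOrder β]

theorem rel_of_mem_Icc_of_notMem_Ioo (hf : Injective f) (hs : NonCrossingSetoid (f · < f ·) s)
    (hac : s a c) (hb : f b ∈ Set.Icc (f a) (f c)) (hd : f d ∉ Set.Ioo (f a) (f c))
    (hbd : s b d) : s a b := by
  obtain hab | hab := hb.1.eq_or_lt
  · exact hf hab ▸ s.refl' a
  obtain hbc | hbc := hb.2.eq_or_lt
  · exact hf hbc ▸ hac
  obtain hda | hda | had := lt_trichotomy (f d) (f a)
  · have hs_da : s d a := nonCrossingSetoid_iff.1 hs d a b c hda hab hbc (s.symm' hbd) hac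
    exact s.symm' (s.trans' hbd hs_da)
  · exact hf hda ▸ s.symm' hbd
  obtain hcd | hcd := (not_lt.1 fun hdc => hd ⟨had, hdc⟩ : f c ≤ f d).eq_or_lt
  · exact s.trans' hac (hf hcd ▸ s.symm' hbd)
  · exact nonCrossingSetoid_iff.1 hs a b c d hab hbc hcd hac hbd

theorem mergeBlocks_rel_of_mem_Icc_of_notMem_Ioo (hf : Injective f)
    (hs : NonCrossingSetoid (f · < f ·) s) (hxy : f x ⋖ f y ∨ f y ⋖ f x) (hac : s a c)
    (hb : f b ∈ Set.Icc (f a) (f c)) (hd : f d ∉ Set.Ioo (f a) (f c))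
    (hbd : mergeBlocks s x y b d) : mergeBlocks s x y a b := by
  have of_path {x y : α} (hxy : f x ⋖ f y ∨ f y ⋖ f x) (hbx : s b x) (hyd : s y d) :
      mergeBlocks s x y a b := by
    by_cases hx : f x ∈ Set.Ioo (f a) (f c)
    · have hy : f y ∈ Set.Icc (f a) (f c) := by
        rcases hxy with h | h
        · exact ⟨hx.1.le.trans h.le, h.ge_of_gt hx.2⟩
        · exact ⟨h.le_of_lt hx.1, h.le.trans hx.2.le⟩
      exact .inr (.inr ⟨hs.rel_of_mem_Icc_of_notMem_Ioo hf hac hy hd hyd, s.symm' hbx⟩)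
    · exact .inl (hs.rel_of_mem_Icc_of_notMem_Ioo hf hac hb hx hbx)
  rcases hbd with hbd | ⟨hbx, hyd⟩ | ⟨hby, hxd⟩
  · exact .inl (hs.rel_of_mem_Icc_of_notMem_Ioo hf hac hb hd hbd)
  · exact of_path hxy hbx hyd
  · exact mergeBlocks_comm s y x ▸ of_path hxy.symm hby hxd

protected theorem mergeBlocks (hf : Injective f) (hs : NonCrossingSetoid (f · < f ·) s)
    (hxy : f x ⋖ f y) : NonCrossingSetoid (f · < f ·) (mergeBlocks s x y) := by
  refine nonCrossingSetoid_iff.2 fun a b c d hab hbc hcd hac hbd => ?_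
  by_cases hs_ac : s a c
  · exact hs.mergeBlocks_rel_of_mem_Icc_of_notMem_Ioo hf (.inl hxy) hs_ac ⟨hab.le, hbc.le⟩
      (fun hd => hd.2.not_gt hcd) hbd
  by_cases hs_bd : s b d
  · have hs_bc := hs.mergeBlocks_rel_of_mem_Icc_of_notMem_Ioo hf (.inl hxy) hs_bd
      ⟨hbc.le, hcd.le⟩ (fun ha => ha.1.not_gt hab) (Setoid.symm' _ hac)
    exact Setoid.trans' _ hac (Setoid.symm' _ hs_bc)
  -- Now `a` and `b` both lie in the block created by the merge.
  have symm := @s.symm'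
  have trans := @s.trans'
  rw [mergeBlocks_iff] at hac hbd ⊢
  grind

variable [DecidableEq α]

theorem mergeBlocks_swap (hf : Injective f) (hs : NonCrossingSetoid (f · < f ·) s)
    (hxy : f x ⋖ f y) :
    NonCrossingSetoid ((f ∘ swap x y) · < (f ∘ swap x y) ·) (mergeBlocks s x y) :=
  (hs.mergeBlocks hf hxy).swap_of_rel (mergeBlocks_rel s x y)

theorem isolate_swap (hf : Injective f) (hs : NonCrossingSetoid (f · < f ·) s)
    (hxy : f x ⋖ f y ∨ f y ⋖ f x) :
    NonCrossingSetoid ((f ∘ swap x y) · < (f ∘ swap x y) ·) (isolate s x) := by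
  refine hs.isolate_of_lt_imp fun u v hux hvx huv => ?_
  simp only [comp_apply, swap_apply_def, if_neg hux, if_neg hvx] at huv
  split_ifs at huv with huy hvy hvy
  · exact absurd huv (lt_irrefl _)
  · subst huy
    exact hxy.elim (fun h => (h.ge_of_gt huv).lt_of_ne' (hf.ne hvy)) (fun h => h.lt.trans huv)
  · subst hvy
    exact hxy.elim (fun h => huv.trans h.lt) (fun h => (h.le_of_lt huv).lt_of_ne (hf.ne huy))
  · exact huv

end NonCrossingSetoid

end NonCrossing

open Submodule in
theorem row_mem_span_noncrossing_swap_general [Finite α] [DecidableEq α] [LinearOrder β]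
    {f : α → β} (hf : Injective f) {x y : α} (hxy : f x ⋖ f y) {s : Setoid α}
    (hs : NonCrossingSetoid (f · < f ·) s) :
    FMat α s ∈ span ℚ
      (FMat α '' {r | NonCrossingSetoid ((f ∘ swap x y) · < (f ∘ swap x y) ·) r}) := by
  set noncrossingRows := FMat α '' {r | NonCrossingSetoid ((f ∘ swap x y) · < (f ∘ swap x y) ·) r}
  have mem {r : Setoid α} (hr : NonCrossingSetoid ((f ∘ swap x y) · < (f ∘ swap x y) ·) r) :
      FMat α r ∈ span ℚ noncrossingRows := subset_span ⟨r, hr, rfl⟩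
  by_cases hsxy : s x y
  · exact mem (hs.swap_of_rel hsxy)
  by_cases hx : ∀ a, s x a → a = x
  · exact mem (isolate_eq_self hx ▸ hs.isolate_swap hf (.inl hxy))
  by_cases hy : ∀ b, s y b → b = y
  · exact mem (isolate_eq_self hy ▸ swap_comm x y ▸ hs.isolate_swap hf (.inr hxy))
  push Not at hx hy
  obtain ⟨a, hxa, hax⟩ := hx
  obtain ⟨b, hyb, hby⟩ := hy
  have hmerge := hs.mergeBlocks_swap hf hxy
  have relation := FMat_uncrossing_relation hxa hax hyb hby hsxy
  rw [← eq_sub_iff_add_eq, ← eq_sub_iff_add_eq, ← eq_sub_iff_add_eq] at relation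
  rw [relation]
  refine sub_mem (sub_mem (sub_mem (add_mem (add_mem (add_mem ?_ ?_) ?_) ?_) ?_) ?_) ?_
  · exact mem (hmerge.isolate y)
  · exact mem (hmerge.isolate x)
  · exact mem ((hs.isolate y).mergeBlocks_swap hf hxy)
  · exact mem ((hs.isolate x).mergeBlocks_swap hf hxy)
  · exact mem hmerge
  · exact mem ((((hs.mergeBlocks hf hxy).isolate x).isolate y).mergeBlocks_swap hf hxy)
  · exact mem (hs.comap (swap x y))

/-- Let `p` be a linear order on `Fin n` (given by its position map) and let `p'`
be the linear order obtained from `p` by swapping the elements occupying two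
consecutive positions `i` and `i + 1`. If `π` is a partition of `Fin n` that is
non-crossing with respect to `p`, then the row `F_n[π]` of the forest
compatibility matrix is a `ℚ`-linear combination of rows `F_n[ρ]` indexed by
partitions `ρ` that are non-crossing with respect to `p'`. -/
theorem row_mem_span_noncrossing_swap (n : ℕ) (hn : 0 < n) (p : Fin n ≃ Fin n)
    (i : ℕ) (hi : i + 1 < n) (π : Setoid (Fin n))
    (hπ : NonCrossingSetoid (ltOfOrder p) π) :
    FMat (Fin n) π ∈ Submodule.span ℚ
      (FMat (Fin n) ''
        {ρ : Setoid (Fin n) |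
          NonCrossingSetoid
            (ltOfOrder (p.trans (Equiv.swap ⟨i, by omega⟩ ⟨i + 1, hi⟩))) ρ}) := by
  have hcov : p (p.symm ⟨i, by omega⟩) ⋖ p (p.symm ⟨i + 1, hi⟩) := by simp [Fin.covBy_iff]
  have hmem := row_mem_span_noncrossing_swap_general p.injective hcov hπ
  simp only [comp_apply, p.injective.map_swap, apply_symm_apply] at hmem
  exact hmem
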